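/- arXiv:1910.00485 — 2 statements merged into one kernel-verified Lean document; each statement's English description precedes it below -/
import Mathlib

section
/- Let P be a finite poset which can be partitioned into two nonempty sets P_1 and P_2 such that every element of P_1 is incomparable to every element of P_2 (each P_i carrying the order induced from P). Then c_⋆(P) = min{ c_⋆(P_1), c_⋆(P_2) }. -/
open Classical in
/-- The finset of all antichains (including the empty antichain) of a finite poset `P`. -/
noncomputable def antichains (P : Type*) [Fintype P] [PartialOrder P] : Finset (Finset P) :=
  Finset.univ.filter (fun A => IsAntichain (· ≤ ·) (A : Set P))

/-- The upper shadow `∂_Q S` of an antichain `S` of `P` inside a subset `Q ⊆ P`. -/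
def upperShadow {P : Type*} [PartialOrder P] (Q : Set P) (S : Set P) : Set P :=
  {y | y ∈ Q ∧ (∃ x ∈ S, x ≤ y) ∧ ∀ z ∈ Q, z < y → ∀ x ∈ S, ¬ x ≤ z}

open Classical in
/-- The antichains of the subposet `Q ⊆ P`, i.e. antichains of `P` contained in `Q`. -/
noncomputable def antichainsIn {P : Type*} [Fintype P] [PartialOrder P] (Q : Set P) :
    Finset (Finset P) :=
  (antichains P).filter (fun A => (A : Set P) ⊆ Q)

/-- A weighting `α ∈ Δ_{a(P)}`: a nonnegative function on the antichains of `P`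
(extended by `0` off the antichains) summing to `1`. -/
def IsWeighting {P : Type*} [Fintype P] [PartialOrder P] (α : Finset P → ℝ) : Prop :=
  (∀ A ∈ antichains P, 0 ≤ α A) ∧ (∀ A ∉ antichains P, α A = 0) ∧
    ∑ A ∈ antichains P, α A = 1

open Classical in
/-- The shadow weighting `∂_Q(α)`: the coordinate of `∂_Q(α)` at an antichain `T` of `Q`
is the sum of `α` over all antichains of `P` whose upper shadow in `Q` is `T`. -/
noncomputable def shadowWeight {P : Type*} [Fintype P] [PartialOrder P]
    (α : Finset P → ℝ) (Q : Set P) (T : Finset P) : ℝ :=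
  ∑ A ∈ (antichains P).filter (fun B : Finset P => upperShadow Q (B : Set P) = (T : Set P)), α A

/-- The critical exponent `c_{α,P}(Q) = H_{a(Q)}(∂_Q(α)) / |Q|` of a subposet `Q` of `P`
with respect to a weighting `α` (natural logarithm; `0 log 0 = 0`). -/
noncomputable def critExp {P : Type*} [Fintype P] [PartialOrder P]
    (α : Finset P → ℝ) (Q : Set P) : ℝ :=
  (∑ T ∈ antichainsIn Q, -(shadowWeight α Q T * Real.log (shadowWeight α Q T))) /
    (Q.ncard : ℝ)

/-- The critical exponent `c_⋆(P) = max_{α ∈ Δ_{a(P)}} min_{∅ ≠ Q ⊆ P} c_{α,P}(Q)`,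
expressed as `sup {c ≥ 0 : ∃ α ∈ Δ_{a(P)}, ∀ ∅ ≠ Q ⊆ P, c ≤ c_{α,P}(Q)}`. -/
noncomputable def critStar (P : Type*) [Fintype P] [PartialOrder P] : ℝ :=
  sSup {c : ℝ | 0 ≤ c ∧ ∃ α : Finset P → ℝ, IsWeighting α ∧
    ∀ Q : Set P, Q.Nonempty → c ≤ critExp α Q}

section Helpers

open Classical in
/-- Pushforward of a weight function. -/
noncomputable def pushW {ι κ : Type*} [Fintype ι] (f : ι → κ) (α : ι → ℝ) (t : κ) : ℝ :=
  ∑ a, if f a = t then α a else 0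

/-- Entropy of a pushforward. -/
noncomputable def entW {ι κ : Type*} [Fintype ι] [Fintype κ] (α : ι → ℝ) (f : ι → κ) : ℝ :=
  ∑ t, Real.negMulLog (pushW f α t)

theorem pushW_comp {ι κ μ : Type*} [Fintype ι] [Fintype κ] (f : ι → κ) (g : κ → μ)
    (α : ι → ℝ) : pushW (g ∘ f) α = pushW g (pushW f α) := by
  classical
  funext t
  unfold pushW
  have : ∀ b : κ, (if g b = t then ∑ a, (if f a = b then α a else 0) else 0)
      = ∑ a, if f a = b then (if g b = t then α a else 0) else 0 := by
    intro b
    split_ifs with h <;> simp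
  simp only [this]
  rw [Finset.sum_comm]
  refine Finset.sum_congr rfl fun a _ => ?_
  rw [Finset.sum_ite_eq]
  simp

theorem entW_comp {ι κ μ : Type*} [Fintype ι] [Fintype κ] [Fintype μ] (f : ι → κ) (g : κ → μ)
    (α : ι → ℝ) : entW α (g ∘ f) = entW (pushW f α) g := by
  unfold entW; rw [pushW_comp]

theorem pushW_inj {ι κ μ : Type*} [Fintype ι] (f : ι → κ) (e : κ → μ)
    (he : Function.Injective e) (α : ι → ℝ) (b : κ) : pushW (e ∘ f) α (e b) = pushW f α b := by
  unfold pushW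
  refine Finset.sum_congr rfl fun a _ => ?_
  by_cases h : f a = b
  · rw [if_pos h]
    exact if_pos (congrArg e h)
  · rw [if_neg h]
    exact if_neg (fun h' => h (he h'))

theorem entW_inj {ι κ μ : Type*} [Fintype ι] [Fintype κ] [Fintype μ] (f : ι → κ) (e : κ → μ)
    (he : Function.Injective e) (α : ι → ℝ) : entW α (e ∘ f) = entW α f := by
  classical
  unfold entW
  symm
  have h1 : ∑ t, Real.negMulLog (pushW f α t)
      = ∑ s ∈ Finset.univ.image e, Real.negMulLog (pushW (e ∘ f) α s) := by
    rw [Finset.sum_image (fun a _ b _ h => he h)]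
    exact Finset.sum_congr rfl fun t _ => by rw [pushW_inj f e he]
  rw [h1]
  refine Finset.sum_subset (Finset.subset_univ _) fun s _ hs => ?_
  have : pushW (e ∘ f) α s = 0 := by
    unfold pushW
    refine Finset.sum_eq_zero fun a _ => ?_
    rw [if_neg]
    rintro rfl
    exact hs (Finset.mem_image_of_mem e (Finset.mem_univ (f a)))
  rw [this, Real.negMulLog_zero]

theorem sum_pushW {ι κ : Type*} [Fintype ι] [Fintype κ] (f : ι → κ) (α : ι → ℝ) :
    ∑ t, pushW f α t = ∑ a, α a := by
  classical
  unfold pushW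
  rw [Finset.sum_comm]
  simp

theorem pushW_nonneg {ι κ : Type*} [Fintype ι] (f : ι → κ) (α : ι → ℝ) (h : ∀ a, 0 ≤ α a)
    (t : κ) : 0 ≤ pushW f α t := by
  unfold pushW
  refine Finset.sum_nonneg fun a _ => ?_
  split_ifs
  · exact h a
  · exact le_rfl

theorem pushW_le_one {ι κ : Type*} [Fintype ι] (f : ι → κ) (α : ι → ℝ) (h : ∀ a, 0 ≤ α a)
    (hs : ∑ a, α a = 1) (t : κ) : pushW f α t ≤ 1 := by
  unfold pushW
  rw [← hs]
  refine Finset.sum_le_sum fun a _ => ?_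
  split_ifs
  · exact le_rfl
  · exact h a

theorem entW_nonneg {ι κ : Type*} [Fintype ι] [Fintype κ] (f : ι → κ) (α : ι → ℝ)
    (h : ∀ a, 0 ≤ α a) (hs : ∑ a, α a = 1) : 0 ≤ entW α f :=
  Finset.sum_nonneg fun t _ =>
    Real.negMulLog_nonneg (pushW_nonneg f α h t) (pushW_le_one f α h hs t)

theorem entW_le {ι κ : Type*} [Fintype ι] [Fintype κ] (f : ι → κ) (α : ι → ℝ)
    (h : ∀ a, 0 ≤ α a) : entW α f ≤ Fintype.card κ := by
  have : ∀ t ∈ (Finset.univ : Finset κ), Real.negMulLog (pushW f α t) ≤ 1 := by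
    intro t _
    have := Real.negMulLog_le_one_sub_self (pushW_nonneg f α h t)
    have := pushW_nonneg f α h t
    linarith
  have := Finset.sum_le_card_nsmul _ _ _ this
  simpa [entW] using this

theorem pushW_prod {ι κ ι' κ' : Type*} [Fintype ι] [Fintype ι'] (f : ι → κ) (g : ι' → κ')
    (α : ι → ℝ) (β : ι' → ℝ) (t : κ × κ') :
    pushW (Prod.map f g) (fun p => α p.1 * β p.2) t = pushW f α t.1 * pushW g β t.2 := by
  unfold pushW
  rw [Fintype.sum_prod_type, Finset.sum_mul_sum]
  refine Finset.sum_congr rfl fun a _ => Finset.sum_congr rfl fun b _ => ?_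
  obtain ⟨s, t⟩ := t
  simp only [Prod.map_apply, Prod.mk.injEq]
  by_cases h1 : f a = s <;> by_cases h2 : g b = t <;> simp [h1, h2]

theorem entW_prod {ι κ ι' κ' : Type*} [Fintype ι] [Fintype ι'] [Fintype κ] [Fintype κ']
    (f : ι → κ) (g : ι' → κ')
    (α : ι → ℝ) (β : ι' → ℝ) (hα : ∑ a, α a = 1) (hβ : ∑ b, β b = 1) :
    entW (fun p : ι × ι' => α p.1 * β p.2) (Prod.map f g) = entW α f + entW β g := by
  unfold entW
  simp only [pushW_prod, Real.negMulLog_mul]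
  rw [Fintype.sum_prod_type]
  simp only [Finset.sum_add_distrib, ← Finset.sum_mul, ← Finset.mul_sum, sum_pushW, hα, hβ]
  simp

open Classical in
/-- The upper shadow as a finset. -/
noncomputable def shF {P : Type*} [Fintype P] [PartialOrder P] (Q : Set P) (A : Finset P) :
    Finset P := Finset.univ.filter (fun y => y ∈ upperShadow Q (A : Set P))

theorem mem_shF {P : Type*} [Fintype P] [PartialOrder P] (Q : Set P) (A : Finset P) (y : P) :
    y ∈ shF Q A ↔ y ∈ upperShadow Q (A : Set P) := by simp [shF]

theorem coe_shF {P : Type*} [Fintype P] [PartialOrder P] (Q : Set P) (A : Finset P) :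
    (shF Q A : Set P) = upperShadow Q (A : Set P) := by
  ext y; simp [mem_shF]

theorem mem_antichains {P : Type*} [Fintype P] [PartialOrder P] (A : Finset P) :
    A ∈ antichains P ↔ ∀ x ∈ A, ∀ y ∈ A, x ≤ y → x = y := by
  simp only [antichains, Finset.mem_filter, Finset.mem_univ, true_and]
  constructor
  · intro h x hx y hy hxy
    exact h.eq hx hy hxy
  · intro h x hx y hy hne hxy
    exact hne (h x hx y hy hxy)

theorem shF_mem {P : Type*} [Fintype P] [PartialOrder P] (Q : Set P) (A : Finset P) :
    shF Q A ∈ antichainsIn Q := by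
  simp only [antichainsIn, Finset.mem_filter, mem_antichains, mem_shF, coe_shF]
  refine ⟨?_, fun x hx => hx.1⟩
  intro x hx y hy hxy
  by_contra hne
  obtain ⟨a, ha, hax⟩ := hx.2.1
  exact hy.2.2 x hx.1 (lt_of_le_of_ne hxy hne) a ha hax

theorem isWeighting_iff {P : Type*} [Fintype P] [PartialOrder P] (α : Finset P → ℝ) :
    IsWeighting α ↔ (∀ A, 0 ≤ α A) ∧ (∀ A ∉ antichains P, α A = 0) ∧ ∑ A, α A = 1 := by
  unfold IsWeighting
  have key : (∀ A ∉ antichains P, α A = 0) → ∑ A ∈ antichains P, α A = ∑ A, α A := fun h =>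
    Finset.sum_subset (Finset.subset_univ _) fun A _ hA => h A hA
  constructor
  · rintro ⟨h1, h2, h3⟩
    refine ⟨fun A => ?_, h2, by rw [← key h2, h3]⟩
    by_cases hA : A ∈ antichains P
    · exact h1 A hA
    · exact (h2 A hA).ge
  · rintro ⟨h1, h2, h3⟩
    exact ⟨fun A _ => h1 A, h2, by rw [key h2, h3]⟩

theorem shadowWeight_eq {P : Type*} [Fintype P] [PartialOrder P] (α : Finset P → ℝ)
    (hα : IsWeighting α) (Q : Set P) (T : Finset P) :
    shadowWeight α Q T = pushW (shF Q) α T := by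
  unfold shadowWeight pushW
  rw [Finset.sum_filter]
  have h2 := hα.2.1
  have : ∀ A : Finset P, (upperShadow Q (A : Set P) = (T : Set P)) ↔ shF Q A = T := by
    intro A
    rw [← coe_shF, Finset.coe_inj]
  refine Eq.trans (Finset.sum_subset (Finset.subset_univ _) fun A _ hA => ?_)
    (Finset.sum_congr rfl fun A _ => ?_)
  · rw [h2 A hA]; simp
  · by_cases h : shF Q A = T
    · rw [if_pos h, if_pos ((this A).2 h)]
    · rw [if_neg h, if_neg (fun h' => h ((this A).1 h'))]

theorem critExp_eq {P : Type*} [Fintype P] [PartialOrder P] (α : Finset P → ℝ)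
    (hα : IsWeighting α) (Q : Set P) :
    critExp α Q = entW α (shF Q) / (Q.ncard : ℝ) := by
  classical
  unfold critExp entW
  congr 1
  simp only [shadowWeight_eq α hα]
  have : ∀ x : ℝ, -(x * Real.log x) = Real.negMulLog x := fun x => by
    simp [Real.negMulLog]
  simp only [this]
  refine Finset.sum_subset (Finset.subset_univ _) fun T _ hT => ?_
  have : pushW (shF Q) α T = 0 := by
    unfold pushW
    refine Finset.sum_eq_zero fun A _ => if_neg ?_
    rintro rfl
    exact hT (shF_mem Q A)
  rw [this, Real.negMulLog_zero]

/-- The set whose supremum is `critStar`. -/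
def critSet (P : Type*) [Fintype P] [PartialOrder P] : Set ℝ :=
  {c : ℝ | 0 ≤ c ∧ ∃ α : Finset P → ℝ, IsWeighting α ∧
    ∀ Q : Set P, Q.Nonempty → c ≤ critExp α Q}

theorem mem_critSet {P : Type*} [Fintype P] [PartialOrder P] (c : ℝ) :
    c ∈ critSet P ↔ 0 ≤ c ∧ ∃ α : Finset P → ℝ, IsWeighting α ∧
      ∀ Q : Set P, c * Q.ncard ≤ entW α (shF Q) := by
  unfold critSet
  simp only [Set.mem_ofPred_eq]
  refine and_congr_right fun hc => exists_congr fun α => and_congr_right fun hα => ?_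
  have hw := (isWeighting_iff α).1 hα
  refine forall_congr' fun Q => ?_
  rw [critExp_eq α hα]
  rcases Q.eq_empty_or_nonempty with rfl | hQ
  · simp [entW_nonneg _ α hw.1 hw.2.2]
  · have : (0 : ℝ) < Q.ncard := by
      exact_mod_cast (Set.ncard_pos (Set.toFinite Q)).2 hQ
    rw [le_div_iff₀ this]
    simp [hQ]

theorem critSet_lower {P : Type*} [Fintype P] [PartialOrder P] (c d : ℝ) (hd : 0 ≤ d)
    (hdc : d ≤ c) (hc : c ∈ critSet P) : d ∈ critSet P := by
  obtain ⟨_, α, hα, h⟩ := hc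
  exact ⟨hd, α, hα, fun Q hQ => hdc.trans (h Q hQ)⟩

theorem critSet_zero {P : Type*} [Fintype P] [PartialOrder P] : (0 : ℝ) ∈ critSet P := by
  classical
  rw [mem_critSet]
  have hw : (∀ A : Finset P, (0 : ℝ) ≤ if A = ∅ then 1 else 0) ∧
      (∀ A ∉ antichains P, (if A = ∅ then (1 : ℝ) else 0) = 0) ∧
      ∑ A : Finset P, (if A = ∅ then (1 : ℝ) else 0) = 1 := by
    refine ⟨fun A => by split_ifs <;> norm_num, fun A hA => ?_, by simp⟩
    rw [if_neg]
    rintro rfl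
    exact hA (by simp [mem_antichains])
  refine ⟨le_rfl, fun A => if A = ∅ then 1 else 0, (isWeighting_iff _).2 hw, fun Q => ?_⟩
  rw [zero_mul]
  exact entW_nonneg _ _ hw.1 hw.2.2

theorem critSet_bdd {P : Type*} [Fintype P] [PartialOrder P] [Nonempty P] :
    BddAbove (critSet P) := by
  refine ⟨Fintype.card (Finset P), fun c hc => ?_⟩
  rw [mem_critSet] at hc
  obtain ⟨h0, α, hα, h⟩ := hc
  have hw := (isWeighting_iff α).1 hα
  have h1 := h Set.univ
  have h2 := entW_le (shF (Set.univ : Set P)) α hw.1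
  have h3 : (1 : ℝ) ≤ (Set.univ : Set P).ncard := by
    exact_mod_cast (Set.ncard_pos (Set.toFinite _)).2 Set.univ_nonempty
  nlinarith

/-- Restriction of a finset to a part. -/
noncomputable def resF {P : Type*} (R : Finset P) (A : Finset P) : Finset {x // x ∈ R} := by
  classical
  exact A.subtype (fun x => x ∈ R)

theorem mem_resF {P : Type*} (R : Finset P) (A : Finset P) (x : {x // x ∈ R}) :
    x ∈ resF R A ↔ (x : P) ∈ A := by
  simp [resF]

theorem shF_resF {P : Type*} [Fintype P] [PartialOrder P] (R : Finset P)
    (hR : ∀ x ∈ R, ∀ y ∉ R, ¬ x ≤ y ∧ ¬ y ≤ x) (Q : Set P) (A : Finset P) :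
    resF R (shF Q A) = shF (Subtype.val ⁻¹' Q) (resF R A) := by
  ext ⟨y, hy⟩
  simp only [mem_resF, mem_shF, upperShadow, Set.mem_ofPred_eq, Set.mem_preimage, Finset.mem_coe]
  refine and_congr_right fun hyQ => and_congr ?_ ?_
  · constructor
    · rintro ⟨x, hx, hxy⟩
      have hxR : x ∈ R := by
        by_contra hxR
        exact (hR y hy x hxR).2 hxy
      exact ⟨⟨x, hxR⟩, by simpa [mem_resF] using hx, hxy⟩
    · rintro ⟨x, hx, hxy⟩
      exact ⟨x, by simpa [mem_resF] using hx, hxy⟩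
  · constructor
    · intro h z hz hzy x hx hxz
      exact h z hz hzy x (by simpa [mem_resF] using hx) hxz
    · intro h z hz hzy x hx hxz
      have hzR : z ∈ R := by
        by_contra hzR
        exact (hR y hy z hzR).2 hzy.le
      have hxR : x ∈ R := by
        by_contra hxR
        exact (hR z hzR x hxR).2 hxz
      exact h ⟨z, hzR⟩ hz hzy ⟨x, hxR⟩ (by simpa [mem_resF] using hx) hxz

theorem resF_antichain {P : Type*} [Fintype P] [PartialOrder P] (R : Finset P) (A : Finset P)
    (hA : A ∈ antichains P) : resF R A ∈ antichains {x // x ∈ R} := by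
  rw [mem_antichains] at *
  intro x hx y hy hxy
  rw [mem_resF] at hx hy
  exact Subtype.ext (hA x hx y hy hxy)

theorem critSet_restrict {P : Type*} [Fintype P] [PartialOrder P] (R : Finset P)
    (hR : ∀ x ∈ R, ∀ y ∉ R, ¬ x ≤ y ∧ ¬ y ≤ x) (c : ℝ) (hc : c ∈ critSet P) :
    c ∈ critSet {x // x ∈ R} := by
  classical
  rw [mem_critSet] at *
  obtain ⟨h0, α, hα, h⟩ := hc
  rw [isWeighting_iff] at hα
  obtain ⟨w1, w2, w3⟩ := hα
  refine ⟨h0, pushW (resF R) α, (isWeighting_iff _).2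
    ⟨pushW_nonneg _ _ w1, fun B hB => ?_, by rw [sum_pushW, w3]⟩, fun Q => ?_⟩
  · unfold pushW
    refine Finset.sum_eq_zero fun A _ => ?_
    split_ifs with hAB
    · apply w2
      intro hA
      exact hB (hAB ▸ resF_antichain R A hA)
    · rfl
  · have h1 := h (Subtype.val '' Q)
    rw [Set.ncard_image_of_injective _ Subtype.val_injective] at h1
    rw [← entW_comp]
    refine h1.trans (le_of_eq ?_)
    have hj : Function.Injective
        (fun B : Finset {x // x ∈ R} => B.map (Function.Embedding.subtype _)) :=
      Finset.map_injective _
    rw [← entW_inj (shF Q ∘ resF R) _ hj]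
    congr 1
    funext A
    have h2 := shF_resF R hR (Subtype.val '' Q) A
    rw [Set.preimage_image_eq _ Subtype.val_injective] at h2
    simp only [Function.comp_apply, ← h2]
    ext y
    simp only [Finset.mem_map, mem_resF, Function.Embedding.coe_subtype]
    constructor
    · intro hy
      obtain ⟨z, hz, rfl⟩ := ((mem_shF _ _ _).1 hy).1
      exact ⟨z, hy, rfl⟩
    · rintro ⟨z, hz, rfl⟩
      exact hz

theorem critSet_union {P : Type*} [Fintype P] [PartialOrder P] (P₁ P₂ : Finset P)
    (hdisj : Disjoint P₁ P₂) (hunion : ∀ x : P, x ∈ P₁ ∨ x ∈ P₂)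
    (hR1 : ∀ x ∈ P₁, ∀ y ∉ P₁, ¬ x ≤ y ∧ ¬ y ≤ x)
    (hR2 : ∀ x ∈ P₂, ∀ y ∉ P₂, ¬ x ≤ y ∧ ¬ y ≤ x) (c : ℝ)
    (hc1 : c ∈ critSet {x // x ∈ P₁}) (hc2 : c ∈ critSet {x // x ∈ P₂}) : c ∈ critSet P := by
  classical
  rw [mem_critSet] at *
  obtain ⟨h0, α, hα, hA⟩ := hc1
  obtain ⟨-, β, hβ, hB⟩ := hc2
  rw [isWeighting_iff] at hα hβ
  have hnot : ∀ x ∈ P₂, x ∉ P₁ := fun x hx hx' => Finset.disjoint_left.1 hdisj hx' hx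
  set e : Finset P → Finset {x // x ∈ P₁} × Finset {x // x ∈ P₂} :=
    fun A => (resF P₁ A, resF P₂ A) with he
  have einj : Function.Injective e := by
    intro A B hAB
    simp only [he, Prod.mk.injEq] at hAB
    ext x
    rcases hunion x with hx | hx
    · have := mem_resF P₁ A ⟨x, hx⟩
      rw [hAB.1, mem_resF] at this
      exact this.symm
    · have := mem_resF P₂ A ⟨x, hx⟩
      rw [hAB.2, mem_resF] at this
      exact this.symm
  have esurj : Function.Surjective e := by
    rintro ⟨A, B⟩
    refine ⟨A.map (Function.Embedding.subtype _) ∪ B.map (Function.Embedding.subtype _), ?_⟩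
    simp only [he, Prod.mk.injEq]
    constructor
    · ext ⟨x, hx⟩
      have : x ∉ P₂ := fun h => hnot x h hx
      simp [mem_resF, hx, this]
    · ext ⟨x, hx⟩
      have : x ∉ P₁ := hnot x hx
      simp [mem_resF, hx, this]
  set γ : Finset {x // x ∈ P₁} × Finset {x // x ∈ P₂} → ℝ := fun p => α p.1 * β p.2 with hγ
  have hpush : pushW e (γ ∘ e) = γ := by
    funext t
    obtain ⟨A, rfl⟩ := esurj t
    unfold pushW
    simp [einj.eq_iff]
  refine ⟨h0, γ ∘ e, (isWeighting_iff _).2 ⟨fun A => mul_nonneg (hα.1 _) (hβ.1 _), ?_, ?_⟩, ?_⟩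
  · intro A hAn
    by_contra hne
    apply hAn
    have h1 : resF P₁ A ∈ antichains _ := by
      by_contra h1
      exact hne (by simp [hγ, he, hα.2.1 _ h1])
    have h2 : resF P₂ A ∈ antichains _ := by
      by_contra h2
      exact hne (by simp [hγ, he, hβ.2.1 _ h2])
    rw [mem_antichains] at *
    intro x hx y hy hxy
    rcases hunion x with hx1 | hx1
    · have hy1 : y ∈ P₁ := by
        by_contra hy1
        exact (hR1 x hx1 y hy1).1 hxy
      exact congrArg Subtype.val
        (h1 ⟨x, hx1⟩ ((mem_resF _ _ _).2 hx) ⟨y, hy1⟩ ((mem_resF _ _ _).2 hy) hxy)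
    · have hy1 : y ∈ P₂ := by
        by_contra hy1
        exact (hR2 x hx1 y hy1).1 hxy
      exact congrArg Subtype.val
        (h2 ⟨x, hx1⟩ ((mem_resF _ _ _).2 hx) ⟨y, hy1⟩ ((mem_resF _ _ _).2 hy) hxy)
  · rw [← sum_pushW e, hpush, hγ, Fintype.sum_prod_type]
    simp only [← Finset.mul_sum, hβ.2.2, mul_one, hα.2.2]
  · intro Q
    have hcomp : e ∘ shF Q =
        Prod.map (shF (Subtype.val ⁻¹' Q)) (shF (Subtype.val ⁻¹' Q)) ∘ e := by
      funext A
      simp only [he, Function.comp_apply, Prod.map_apply, shF_resF P₁ hR1, shF_resF P₂ hR2]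
    rw [← entW_inj (shF Q) e einj, hcomp, entW_comp, hpush, hγ,
      entW_prod _ _ α β hα.2.2 hβ.2.2]
    have k1 := hA (Subtype.val ⁻¹' Q)
    have k2 := hB (Subtype.val ⁻¹' Q)
    have hcard : Q.ncard = (Subtype.val ⁻¹' Q : Set {x // x ∈ P₁}).ncard
        + (Subtype.val ⁻¹' Q : Set {x // x ∈ P₂}).ncard := by
      rw [← Set.ncard_image_of_injective (Subtype.val ⁻¹' Q : Set {x // x ∈ P₁})
          Subtype.val_injective,
        ← Set.ncard_image_of_injective (Subtype.val ⁻¹' Q : Set {x // x ∈ P₂})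
          Subtype.val_injective,
        ← Set.ncard_union_eq _ (Set.toFinite _) (Set.toFinite _)]
      · congr 1
        ext x
        have := hunion x
        simp only [Set.mem_union, Set.mem_image, Set.mem_preimage, Subtype.exists,
          exists_and_left, exists_prop, exists_eq_right_right]
        tauto
      · rw [Set.disjoint_left]
        rintro _ ⟨x, _, rfl⟩ ⟨y, _, hy⟩
        exact hnot y y.2 (hy ▸ x.2)
    rw [hcard]
    push_cast
    linarith

end Helpers

/-- If a finite poset `P` is partitioned into two nonempty sets `P₁`, `P₂` of mutually
incomparable elements (each with the induced order), then
`c_⋆(P) = min (c_⋆(P₁)) (c_⋆(P₂))`. -/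
theorem stmt10 (P : Type) [Fintype P] [PartialOrder P]
    (P₁ P₂ : Finset P) (h1 : P₁.Nonempty) (h2 : P₂.Nonempty)
    (hdisj : Disjoint P₁ P₂) (hunion : ∀ x : P, x ∈ P₁ ∨ x ∈ P₂)
    (hincomp : ∀ x ∈ P₁, ∀ y ∈ P₂, ¬ x ≤ y ∧ ¬ y ≤ x) :
    critStar P = min (critStar {x // x ∈ P₁}) (critStar {x // x ∈ P₂}) := by
  have hnot : ∀ x ∈ P₂, x ∉ P₁ := fun x hx hx' => Finset.disjoint_left.1 hdisj hx' hx
  have hR1 : ∀ x ∈ P₁, ∀ y ∉ P₁, ¬ x ≤ y ∧ ¬ y ≤ x := fun x hx y hy =>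
    hincomp x hx y ((hunion y).resolve_left hy)
  have hR2 : ∀ x ∈ P₂, ∀ y ∉ P₂, ¬ x ≤ y ∧ ¬ y ≤ x := fun x hx y hy =>
    (hincomp y ((hunion y).resolve_right hy) x hx).symm
  have : Nonempty {x // x ∈ P₁} := h1.to_subtype
  have : Nonempty {x // x ∈ P₂} := h2.to_subtype
  have : Nonempty P := ⟨h1.choose⟩
  change sSup (critSet P) = min (sSup (critSet {x // x ∈ P₁})) (sSup (critSet {x // x ∈ P₂}))
  apply le_antisymm
  · refine csSup_le ⟨0, critSet_zero⟩ fun c hc => le_min ?_ ?_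
    · exact le_csSup critSet_bdd (critSet_restrict P₁ hR1 c hc)
    · exact le_csSup critSet_bdd (critSet_restrict P₂ hR2 c hc)
  · refine le_of_forall_lt fun d hd => ?_
    obtain ⟨hd1, hd2⟩ := lt_min_iff.1 hd
    obtain ⟨a, ha, hda⟩ := exists_lt_of_lt_csSup ⟨0, critSet_zero⟩ hd1
    obtain ⟨b, hb, hdb⟩ := exists_lt_of_lt_csSup ⟨0, critSet_zero⟩ hd2
    have h0 : 0 ≤ min a b := le_min ha.1 hb.1
    exact lt_of_lt_of_le (lt_min hda hdb) (le_csSup critSet_bdd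
      (critSet_union P₁ P₂ hdisj hunion hR1 hR2 _
        (critSet_lower a _ h0 (min_le_left _ _) ha) (critSet_lower b _ h0 (min_le_right _ _) hb)))
end

section
/- For every integer t ≥ 2, the chain C_t of length t satisfies c_⋆(C_t) = log(t+1)/t; moreover the maximum in the definition of c_⋆(C_t) is attained at the uniform weighting u = (1/(t+1), …, 1/(t+1)) ∈ Δ_{t+1} (so C_t is uniformly balanced, i.e. c_⋆(C_t) = log(a(C_t))/|C_t|). -/
theorem antichainsIn_univ_eq {P : Type*} [Fintype P] [PartialOrder P] :
    antichainsIn (Set.univ : Set P) = antichains P := by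
  classical
  ext A
  simp [antichainsIn]

theorem upperShadow_self {P : Type*} [Fintype P] [PartialOrder P] (Q : Set P) (T : Finset P)
    (hT : T ∈ antichainsIn Q) : upperShadow Q (T : Set P) = (T : Set P) := by
  classical
  simp only [antichainsIn, antichains, Finset.mem_filter, Finset.mem_univ, true_and] at hT
  obtain ⟨ha, hs⟩ := hT
  ext y
  constructor
  · rintro ⟨hy, ⟨x, hx, hxy⟩, hmin⟩
    by_cases h : x = y
    · exact h ▸ hx
    · exact absurd le_rfl (hmin x (hs hx) (lt_of_le_of_ne hxy h) x hx)
  · intro hy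
    refine ⟨hs hy, ⟨y, hy, le_rfl⟩, ?_⟩
    intro z hz hzy x hx hxz
    have hlt := lt_of_le_of_lt hxz hzy
    exact ha hx hy hlt.ne hlt.le

open Classical in
theorem upperShadow_mem {P : Type*} [Fintype P] [PartialOrder P] (Q : Set P) (S : Set P) :
    (upperShadow Q S).toFinset ∈ antichainsIn Q := by
  simp only [antichainsIn, antichains, Finset.mem_filter, Finset.mem_univ, true_and,
    Set.coe_toFinset]
  refine ⟨?_, fun y hy => hy.1⟩
  rintro a ⟨haQ, ⟨x, hx, hxa⟩, _⟩ b ⟨_, _, hb⟩ hab hle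
  exact hb a haQ (lt_of_le_of_ne hle hab) x hx hxa

theorem sum_shadowWeight {P : Type*} [Fintype P] [PartialOrder P] (α : Finset P → ℝ)
    (Q : Set P) :
    ∑ T ∈ antichainsIn Q, shadowWeight α Q T = ∑ A ∈ antichains P, α A := by
  classical
  rw [← Finset.sum_fiberwise_of_maps_to
    (g := fun A : Finset P => (upperShadow Q (A : Set P)).toFinset)
    (fun A _ => upperShadow_mem Q (A : Set P)) α]
  refine Finset.sum_congr rfl fun T _ => ?_
  unfold shadowWeight
  refine Finset.sum_congr ?_ fun _ _ => rfl
  ext A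
  simp only [Finset.mem_filter, and_congr_right_iff]
  intro _
  rw [← Finset.coe_inj, Set.coe_toFinset]

theorem shadowWeight_nonneg {P : Type*} [Fintype P] [PartialOrder P] {α : Finset P → ℝ}
    (hα : IsWeighting α) (Q : Set P) (T : Finset P) : 0 ≤ shadowWeight α Q T :=
  Finset.sum_nonneg fun A hA => hα.1 A (Finset.mem_filter.1 hA).1

theorem le_shadowWeight {P : Type*} [Fintype P] [PartialOrder P] {α : Finset P → ℝ}
    (hα : IsWeighting α) (Q : Set P) (T : Finset P) (hT : T ∈ antichainsIn Q) :
    α T ≤ shadowWeight α Q T := by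
  classical
  unfold shadowWeight
  refine Finset.single_le_sum (f := α) (fun A hA => hα.1 A (Finset.mem_filter.1 hA).1) ?_
  exact Finset.mem_filter.2 ⟨(Finset.mem_filter.1 hT).1, upperShadow_self Q T hT⟩

theorem card_antichainsIn_chain {t : ℕ} (Q : Set (Fin t)) :
    (antichainsIn Q).card = Q.ncard + 1 := by
  classical
  have h : antichainsIn Q = insert ∅ (Q.toFinset.image fun x => ({x} : Finset (Fin t))) := by
    ext A
    simp only [antichainsIn, antichains, Finset.mem_filter, Finset.mem_univ, true_and,
      Finset.mem_insert, Finset.mem_image, Set.mem_toFinset]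
    constructor
    · rintro ⟨ha, hs⟩
      rcases A.eq_empty_or_nonempty with h | ⟨x, hx⟩
      · exact Or.inl h
      · refine Or.inr ⟨x, hs hx, ?_⟩
        ext y
        rw [Finset.mem_singleton]
        constructor
        · rintro rfl
          exact hx
        · intro hy
          by_contra hne
          rcases le_total x y with h | h
          · exact ha hx hy (Ne.symm hne) h
          · exact ha hy hx hne h
    · rintro (rfl | ⟨x, hx, rfl⟩)
      · simp
      · simpa using hx
  rw [h, Finset.card_insert_of_notMem (by simp),
    Finset.card_image_of_injective _ Finset.singleton_injective, Set.ncard_eq_toFinset_card']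

theorem entropy_le_log_card {ι : Type*} (s : Finset ι) (w : ι → ℝ) (hs : s.Nonempty)
    (h0 : ∀ i ∈ s, 0 ≤ w i) (h1 : ∑ i ∈ s, w i = 1) :
    ∑ i ∈ s, -(w i * Real.log (w i)) ≤ Real.log s.card := by
  have hN : (0 : ℝ) < s.card := by exact_mod_cast hs.card_pos
  have key : ∀ i ∈ s, -(w i * Real.log (w i)) ≤
      w i * Real.log s.card + ((s.card : ℝ)⁻¹ - w i) := by
    intro i hi
    rcases (h0 i hi).eq_or_lt with h | h
    · rw [← h]
      simp
    · have h2 := Real.log_le_sub_one_of_pos (x := (s.card * w i)⁻¹) (by positivity)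
      rw [Real.log_inv, Real.log_mul hN.ne' h.ne'] at h2
      have h3 := mul_le_mul_of_nonneg_left h2 h.le
      have h4 : w i * ((s.card * w i)⁻¹ - 1) = (s.card : ℝ)⁻¹ - w i := by
        field_simp
      rw [h4] at h3
      linarith
  refine (Finset.sum_le_sum key).trans ?_
  rw [Finset.sum_add_distrib, ← Finset.sum_mul, Finset.sum_sub_distrib, h1]
  simp [hN.ne']

theorem chord_bound {n w : ℝ} (hn : 1 < n) (hw : 1 / n ≤ w) (hw1 : w ≤ 1) :
    Real.log n / (n - 1) * (1 - w) ≤ -(w * Real.log w) := by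
  have hn0 : 0 < n := by linarith
  have hn1 : 0 < n - 1 := by linarith
  have hw' : 1 ≤ n * w := by
    rw [div_le_iff₀ hn0] at hw
    linarith
  have ha : 0 ≤ n * (1 - w) / (n - 1) :=
    div_nonneg (mul_nonneg hn0.le (by linarith)) hn1.le
  have hb : 0 ≤ (n * w - 1) / (n - 1) := div_nonneg (by linarith) hn1.le
  have hab : n * (1 - w) / (n - 1) + (n * w - 1) / (n - 1) = 1 := by
    field_simp
    ring
  have hx : n⁻¹ ∈ Set.Ici (0 : ℝ) := (inv_pos.2 hn0).le
  have hy : (1 : ℝ) ∈ Set.Ici (0 : ℝ) := Set.mem_Ici.2 zero_le_one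
  have hc := Real.concaveOn_negMulLog.2 hx hy ha hb hab
  have e : n * (1 - w) / (n - 1) * n⁻¹ + (n * w - 1) / (n - 1) * 1 = w := by
    field_simp
    ring
  have e2 : n * (1 - w) / (n - 1) * (-n⁻¹ * -Real.log n) + (n * w - 1) / (n - 1) * (-1 * 0)
      = Real.log n / (n - 1) * (1 - w) := by
    field_simp
    ring
  simp only [smul_eq_mul] at hc
  rw [e] at hc
  simp only [Real.negMulLog, Real.log_one, Real.log_inv] at hc
  rw [e2] at hc
  linarith

theorem critExp_univ_le {t : ℕ} (α : Finset (Fin t) → ℝ) (hα : IsWeighting α) :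
    critExp α Set.univ ≤ Real.log (t + 1) / t := by
  have hc := card_antichainsIn_chain (Set.univ : Set (Fin t))
  have h := entropy_le_log_card (antichainsIn (Set.univ : Set (Fin t)))
    (shadowWeight α Set.univ) (Finset.card_pos.1 (by omega))
    (fun T _ => shadowWeight_nonneg hα _ T) ((sum_shadowWeight α _).trans hα.2.2)
  rw [hc] at h
  unfold critExp
  simp only [Set.ncard_univ, Nat.card_fin, Nat.cast_add, Nat.cast_one] at h ⊢
  gcongr

theorem le_critExp_of_uniform {t : ℕ} (ht : 2 ≤ t) (u : Finset (Fin t) → ℝ)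
    (hu : IsWeighting u) (hu' : ∀ A ∈ antichains (Fin t), u A = 1 / ((t : ℝ) + 1))
    (Q : Set (Fin t)) (hQ : Q.Nonempty) : Real.log (t + 1) / t ≤ critExp u Q := by
  have hsum : ∑ T ∈ antichainsIn Q, shadowWeight u Q T = 1 :=
    (sum_shadowWeight u Q).trans hu.2.2
  have hQ0 : (0 : ℝ) < Q.ncard := by
    exact_mod_cast (Set.ncard_pos (Set.toFinite Q)).2 hQ
  have ht0 : (0 : ℝ) < t := by exact_mod_cast (by omega : 0 < t)
  unfold critExp
  rw [le_div_iff₀ hQ0]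
  have key : ∀ T ∈ antichainsIn Q, Real.log (t + 1) / t * (1 - shadowWeight u Q T) ≤
      -(shadowWeight u Q T * Real.log (shadowWeight u Q T)) := by
    intro T hT
    have h := chord_bound (n := (t : ℝ) + 1) (w := shadowWeight u Q T) (by linarith)
      (by
        rw [← hu' T (by classical exact (Finset.mem_filter.1 hT).1)]
        exact le_shadowWeight hu Q T hT)
      (by
        rw [← hsum]
        exact Finset.single_le_sum (fun A _ => shadowWeight_nonneg hu Q A) hT)
    simpa using h
  refine le_trans (le_of_eq ?_) (Finset.sum_le_sum key)
  rw [← Finset.mul_sum, Finset.sum_sub_distrib, hsum]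
  simp [card_antichainsIn_chain]

/-- For every `t ≥ 2`, the chain `C_t` (modelled as `Fin t` with its linear order) has
`a(C_t) = t + 1` antichains, satisfies `c_⋆(C_t) = log(t+1)/t = log(a(C_t))/|C_t|`
(so `C_t` is uniformly balanced), and the maximum in the definition of `c_⋆(C_t)` is
attained at the uniform weighting `u ≡ 1/(t+1)` on the antichains:
`min_{∅ ≠ Q ⊆ C_t} c_{u,C_t}(Q) = log(t+1)/t`. -/
theorem stmt13 (t : ℕ) (ht : 2 ≤ t) :
    (antichains (Fin t)).card = t + 1 ∧
    critStar (Fin t) = Real.log (t + 1) / t ∧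
    (letI u : Finset (Fin t) → ℝ :=
      fun A => if A ∈ antichains (Fin t) then 1 / ((t : ℝ) + 1) else 0
     IsWeighting u ∧
       sInf {v : ℝ | ∃ Q : Set (Fin t), Q.Nonempty ∧ v = critExp u Q} =
         Real.log (t + 1) / t) := by
  have hcard : (antichains (Fin t)).card = t + 1 := by
    rw [← antichainsIn_univ_eq, card_antichainsIn_chain]
    simp
  have ht0 : (0 : ℝ) < t := by exact_mod_cast (by omega : 0 < t)
  have hne : (Set.univ : Set (Fin t)).Nonempty := ⟨⟨0, by omega⟩, trivial⟩
  obtain ⟨u, hudef⟩ : ∃ u : Finset (Fin t) → ℝ,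
      u = fun A => if A ∈ antichains (Fin t) then 1 / ((t : ℝ) + 1) else 0 := ⟨_, rfl⟩
  have hu' : ∀ A ∈ antichains (Fin t), u A = 1 / ((t : ℝ) + 1) := by
    intro A hA
    rw [hudef]
    exact if_pos hA
  have hu : IsWeighting u := by
    refine ⟨fun A hA => ?_, fun A hA => ?_, ?_⟩
    · rw [hu' A hA]
      positivity
    · rw [hudef]
      exact if_neg hA
    · rw [Finset.sum_congr rfl hu', Finset.sum_const, hcard, nsmul_eq_mul]
      push_cast
      field_simp
  have hlow := le_critExp_of_uniform ht u hu hu'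
  have hlog : 0 ≤ Real.log (t + 1) / t :=
    div_nonneg (Real.log_nonneg (by linarith)) ht0.le
  refine ⟨hcard, ?_, ?_⟩
  · refine IsGreatest.csSup_eq ⟨⟨hlog, u, hu, hlow⟩, ?_⟩
    rintro c ⟨_, α, hα, h⟩
    exact (h _ hne).trans (critExp_univ_le α hα)
  · show IsWeighting (fun A => if A ∈ antichains (Fin t) then 1 / ((t : ℝ) + 1) else 0) ∧
      sInf {v : ℝ | ∃ Q : Set (Fin t), Q.Nonempty ∧ v = critExp
        (fun A => if A ∈ antichains (Fin t) then 1 / ((t : ℝ) + 1) else 0) Q} = _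
    rw [← hudef]
    refine ⟨hu, IsLeast.csInf_eq ⟨⟨Set.univ, hne, ?_⟩, ?_⟩⟩
    · exact le_antisymm (hlow _ hne) (critExp_univ_le u hu)
    · rintro v ⟨Q, hQ, rfl⟩
      exact hlow Q hQ
end
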